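/- Let p > 3 and h ∈ (1, p−1). For every c > 0 there exists L₀ ≥ 1 such that for all L ≥ L₀ and all m ≥ 0: ∫_{m}^{m+1} ∫_{−β}^{m} (L + β − α)^{1−p} ⟨α⟩^{−h} (β−m)^{−1/2} dα dβ ≤ c ⟨m⟩^{−h}. -/

import Mathlib

open MeasureTheory intervalIntegral

/-- The Japanese bracket `⟨x⟩ = (1 + x²)^{1/2}`. -/
noncomputable def jap (x : ℝ) : ℝ := Real.sqrt (1 + x ^ 2)

lemma one_le_jap (x : ℝ) : 1 ≤ jap x :=
  Real.one_le_sqrt.2 (by nlinarith [sq_nonneg x])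

lemma jap_pos (x : ℝ) : 0 < jap x := one_pos.trans_le (one_le_jap x)

lemma abs_le_jap (x : ℝ) : |x| ≤ jap x :=
  Real.abs_le_sqrt (by linarith)

lemma jap_le_one_add {x : ℝ} (hx : 0 ≤ x) : jap x ≤ 1 + x :=
  Real.sqrt_le_iff.2 ⟨by linarith, by nlinarith⟩

lemma jap_le_jap_add_abs_sub (x y : ℝ) : jap x ≤ jap y + |x - y| := by
  have hy := abs_le_jap y
  have hsq : jap y ^ 2 = 1 + y ^ 2 := Real.sq_sqrt (by positivity)
  refine Real.sqrt_le_iff.2 ⟨by linarith [jap_pos y, abs_nonneg (x - y)], ?_⟩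
  have hprod : y * (x - y) ≤ jap y * |x - y| :=
    (le_abs_self _).trans (by rw [abs_mul]; gcongr)
  nlinarith [sq_abs (x - y)]

lemma integrable_jap_rpow_neg {h : ℝ} (hh : 1 < h) :
    Integrable (fun x : ℝ => jap x ^ (-h)) := by
  have hint := integrable_rpow_neg_one_add_norm_sq (E := ℝ) (μ := volume) (r := h)
    (by simpa using hh)
  refine hint.congr (Filter.Eventually.of_forall fun x => ?_)
  simp only [jap, Real.norm_eq_abs, sq_abs]
  rw [Real.sqrt_eq_rpow, ← Real.rpow_mul (by positivity)]
  ring_nf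

/-- The kernel `(L + β - α)^{1-p} ⟨α⟩^{-h}` is dominated by a small multiple of `⟨m⟩^{-h}` times
an integrable profile centred at `m` and at `0`. -/
lemma kernel_le {p h L m α β : ℝ} (hh : 0 < h) (hp : h < p - 1) (hL : 1 ≤ L)
    (hα : α ≤ m) (hβ : m ≤ β) :
    (L + β - α) ^ (1 - p) * jap α ^ (-h) ≤
      2 ^ h * L ^ (-(p - 1 - h)) * jap m ^ (-h) * (jap (m - α) ^ (-h) + jap α ^ (-h)) := by
  set s := L + β - α with hs
  have hLs : L ≤ s := by linarith
  have hL0 : 0 < L := by linarith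
  have hs0 : 0 < s := by linarith
  have hα0 := jap_pos α
  have hm0 := jap_pos m
  have hd0 := jap_pos (m - α)
  have hds : jap (m - α) ≤ s := (jap_le_one_add (by linarith)).trans (by linarith)
  have hm : jap m ≤ jap α + s := by
    have := jap_le_jap_add_abs_sub m α
    rw [abs_of_nonneg (by linarith)] at this
    linarith
  have hmh : jap m ^ h ≤ 2 ^ h * (jap α ^ h + s ^ h) := by
    have hα' : 0 ≤ jap α ^ h := by positivity
    have hs' : 0 ≤ s ^ h := by positivity
    rcases le_total (jap α) s with hle | hle
    · calc jap m ^ h ≤ (2 * s) ^ h := by gcongr; linarith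
        _ = 2 ^ h * s ^ h := Real.mul_rpow (by norm_num) hs0.le
        _ ≤ _ := by gcongr; linarith
    · calc jap m ^ h ≤ (2 * jap α) ^ h := by gcongr; linarith
        _ = 2 ^ h * jap α ^ h := Real.mul_rpow (by norm_num) hα0.le
        _ ≤ _ := by gcongr; linarith
  have hsplit : s ^ (1 - p) = s ^ (-(p - 1 - h)) * s ^ (-h) := by
    rw [← Real.rpow_add hs0]; ring_nf
  have hdecay : s ^ (-(p - 1 - h)) ≤ L ^ (-(p - 1 - h)) :=
    Real.rpow_le_rpow_of_nonpos hL0 hLs (by linarith)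
  have hprofile : s ^ (-h) ≤ jap (m - α) ^ (-h) :=
    Real.rpow_le_rpow_of_nonpos hd0 hds (by linarith)
  have hbracket : s ^ (-h) * jap α ^ (-h) ≤ 2 ^ h * jap m ^ (-h) * (s ^ (-h) + jap α ^ (-h)) := by
    rw [Real.rpow_neg hs0.le, Real.rpow_neg hα0.le, Real.rpow_neg hm0.le]
    have h1 : 0 < s ^ h := by positivity
    have h2 : 0 < jap α ^ h := by positivity
    have h3 : 0 < jap m ^ h := by positivity
    calc (s ^ h)⁻¹ * (jap α ^ h)⁻¹
        = jap m ^ h * ((jap m ^ h)⁻¹ * ((s ^ h)⁻¹ * (jap α ^ h)⁻¹)) := by field_simp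
      _ ≤ 2 ^ h * (jap α ^ h + s ^ h) * ((jap m ^ h)⁻¹ * ((s ^ h)⁻¹ * (jap α ^ h)⁻¹)) := by
          gcongr
      _ = _ := by field_simp
  calc s ^ (1 - p) * jap α ^ (-h)
      = s ^ (-(p - 1 - h)) * (s ^ (-h) * jap α ^ (-h)) := by rw [hsplit]; ring
    _ ≤ L ^ (-(p - 1 - h)) * (2 ^ h * jap m ^ (-h) * (jap (m - α) ^ (-h) + jap α ^ (-h))) := by
        refine mul_le_mul hdecay (hbracket.trans ?_) (by positivity) (by positivity)
        gcongr
    _ = _ := by ring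

lemma integral_kernel_le {p h L m β : ℝ} (hh : 1 < h) (hp : h < p - 1) (hL : 1 ≤ L)
    (hm : 0 ≤ m) (hβ : m ≤ β) :
    ∫ α in (-β)..m, (L + β - α) ^ (1 - p) * jap α ^ (-h) ≤
      2 ^ h * L ^ (-(p - 1 - h)) * jap m ^ (-h) * (2 * ∫ x, jap x ^ (-h)) := by
  have hJ := integrable_jap_rpow_neg hh
  have hJm : Integrable fun α => jap (m - α) ^ (-h) := hJ.comp_sub_left m
  have hL0 : 0 < L := by linarith
  have hm0 := jap_pos m
  have hG := (hJm.add hJ).const_mul (2 ^ h * L ^ (-(p - 1 - h)) * jap m ^ (-h))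
  rw [integral_of_le (by linarith)]
  calc ∫ α in Set.Ioc (-β) m, (L + β - α) ^ (1 - p) * jap α ^ (-h)
      ≤ ∫ α in Set.Ioc (-β) m, 2 ^ h * L ^ (-(p - 1 - h)) * jap m ^ (-h) *
          (jap (m - α) ^ (-h) + jap α ^ (-h)) := by
        refine integral_mono_of_nonneg ?_ hG.integrableOn ?_ <;>
          filter_upwards [ae_restrict_mem measurableSet_Ioc] with α hα
        · have : 0 < L + β - α := by linarith [hα.2]
          have := jap_pos α
          simp only [Pi.zero_apply]
          positivity
        · exact kernel_le (by linarith) hp hL hα.2 hβ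
    _ ≤ ∫ α, 2 ^ h * L ^ (-(p - 1 - h)) * jap m ^ (-h) *
          (jap (m - α) ^ (-h) + jap α ^ (-h)) := by
        refine setIntegral_le_integral hG (Filter.Eventually.of_forall fun α => ?_)
        have := jap_pos α
        have := jap_pos (m - α)
        simp only [Pi.zero_apply]
        positivity
    _ = _ := by
        rw [MeasureTheory.integral_const_mul, MeasureTheory.integral_add hJm hJ,
          integral_sub_left_eq_self (fun x => jap x ^ (-h)) volume m, two_mul]

lemma intervalIntegrable_sub_rpow_neg_half (m : ℝ) :
    IntervalIntegrable (fun β : ℝ => (β - m) ^ (-(1 / 2) : ℝ)) volume m (m + 1) := by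
  have := (intervalIntegrable_rpow' (a := 0) (b := 1) (r := (-(1 / 2) : ℝ))
    (by norm_num)).comp_sub_right m
  simpa [add_comm] using this

lemma integral_sub_rpow_neg_half (m : ℝ) :
    ∫ β in m..(m + 1), (β - m) ^ (-(1 / 2) : ℝ) = 2 := by
  rw [integral_comp_sub_right (fun x : ℝ => x ^ (-(1 / 2) : ℝ)) m, integral_rpow (by norm_num)]
  norm_num

theorem interior_region_estimate_three (p h : ℝ) (hp : 3 < p) (hh1 : 1 < h) (hh2 : h < p - 1) :
    ∀ c : ℝ, 0 < c → ∃ L₀ : ℝ, 1 ≤ L₀ ∧ ∀ L : ℝ, L₀ ≤ L → ∀ m : ℝ, 0 ≤ m →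
      (∫ β in m..(m + 1), ∫ α in (-β)..m,
        (L + β - α) ^ (1 - p) * jap α ^ (-h) * (β - m) ^ (-(1 / 2) : ℝ))
      ≤ c * jap m ^ (-h) := by
  intro c hc
  set K : ℝ := ∫ x, jap x ^ (-h)
  have hlim : Filter.Tendsto (fun L : ℝ => 2 ^ h * L ^ (-(p - 1 - h)) * (2 * K) * 2)
      Filter.atTop (nhds 0) := by
    simpa using (((tendsto_rpow_neg_atTop (y := p - 1 - h) (by linarith)).const_mul
      ((2 : ℝ) ^ h)).mul_const (2 * K)).mul_const 2
  obtain ⟨L₁, hL₁⟩ := Filter.eventually_atTop.1 (hlim.eventually_le_const hc)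
  refine ⟨max 1 L₁, le_max_left _ _, fun L hL m hm => ?_⟩
  have hL1 : 1 ≤ L := (le_max_left _ _).trans hL
  have hsmall := hL₁ L ((le_max_right _ _).trans hL)
  have hm0 := jap_pos m
  set B : ℝ := 2 ^ h * L ^ (-(p - 1 - h)) * jap m ^ (-h) * (2 * K) with hB
  simp only [intervalIntegral.integral_mul_const]
  have hW := (intervalIntegrable_sub_rpow_neg_half m).const_mul B
  calc ∫ β in m..(m + 1), (∫ α in (-β)..m, (L + β - α) ^ (1 - p) * jap α ^ (-h)) *
          (β - m) ^ (-(1 / 2) : ℝ)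
      ≤ ∫ β in m..(m + 1), B * (β - m) ^ (-(1 / 2) : ℝ) := by
        rw [integral_of_le (by linarith), integral_of_le (by linarith)]
        refine integral_mono_of_nonneg ?_ hW.1 ?_ <;>
          filter_upwards [ae_restrict_mem measurableSet_Ioc] with β hβ
        · refine mul_nonneg (integral_nonneg (by linarith [hβ.1]) fun α hα => ?_)
            (Real.rpow_nonneg (by linarith [hβ.1]) _)
          have : 0 < L + β - α := by linarith [hα.2, hβ.1]
          have := jap_pos α
          positivity
        · exact mul_le_mul_of_nonneg_right (integral_kernel_le hh1 hh2 hL1 hm hβ.1.le)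
            (Real.rpow_nonneg (by linarith [hβ.1]) _)
    _ = 2 ^ h * L ^ (-(p - 1 - h)) * (2 * K) * 2 * jap m ^ (-h) := by
        rw [intervalIntegral.integral_const_mul, integral_sub_rpow_neg_half, hB]; ring
    _ ≤ c * jap m ^ (-h) := by gcongr
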